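/- arXiv:1007.3425 — 3 statements merged into one kernel-verified Lean document; each statement's English description precedes it below -/
import Mathlib

section
/- Let p > 2 and set q = p/(p − 2), so that 1/q + 2/p = 1. Let ε ≥ 0, let K ≥ 1, and let X ≥ 0 be a real number satisfying X ≤ ε²·(K + X/2)^{1/q}. Then X ≤ 2^{p/2}·(ε² + ε^p)·K^{1/q}. -/
/-- real-variable inequality underlying Lemma 4.2.
For `p > 2`, `q = p/(p−2)`, `ε ≥ 0`, `K ≥ 1`, `X ≥ 0`: if `X ≤ ε² (K + X/2)^{1/q}` then
`X ≤ 2^{p/2} (ε² + ε^p) K^{1/q}`. -/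
theorem stmt3 (p q ε K X : ℝ) (hp : 2 < p) (hq : q = p / (p - 2))
    (hε : 0 ≤ ε) (hK : 1 ≤ K) (hX : 0 ≤ X)
    (h : X ≤ ε ^ (2 : ℝ) * (K + X / 2) ^ (1 / q)) :
    X ≤ 2 ^ (p / 2) * (ε ^ (2 : ℝ) + ε ^ p) * K ^ (1 / q) := by
  have hp0 : 0 < p := by linarith
  have hp2 : 0 < p - 2 := by linarith
  have ha : 1 / q = 1 - 2 / p := by
    rw [hq]; field_simp
  have h2p : 0 < 2 / p := by positivity
  have ha0 : 0 < 1 / q := by rw [hq]; positivity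
  have ha1 : 1 / q ≤ 1 := by linarith
  have hC : (2 : ℝ) ≤ 2 ^ (p / 2) := by
    have := Real.rpow_le_rpow_of_exponent_le (x := 2) (by norm_num)
      (show (1 : ℝ) ≤ p / 2 by linarith)
    simpa using this
  have hKa : 1 ≤ K ^ (1 / q) := Real.one_le_rpow hK ha0.le
  have hE : 0 ≤ ε ^ (2 : ℝ) := Real.rpow_nonneg hε _
  have hEp : 0 ≤ ε ^ p := Real.rpow_nonneg hε _
  have key : X ≤ 2 * (ε ^ (2 : ℝ) + ε ^ p) * K ^ (1 / q) := by
    have hsub : (K + X / 2) ^ (1 / q) ≤ K ^ (1 / q) + (X / 2) ^ (1 / q) :=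
      Real.rpow_add_le_add_rpow (by linarith) (by linarith) ha0.le ha1
    have h1 := h.trans (mul_le_mul_of_nonneg_left hsub hE)
    rcases le_or_gt (ε ^ (2 : ℝ) * (X / 2) ^ (1 / q)) (X / 2) with hc | hc
    · have : 0 ≤ ε ^ p * K ^ (1 / q) := by positivity
      nlinarith
    · have hXb : X ≤ 2 * ε ^ p := by
        rcases hX.eq_or_lt with h0 | h0
        · rw [← h0]; positivity
        have hY : 0 < X / 2 := by linarith
        have hYa : 0 < (X / 2) ^ (1 / q) := Real.rpow_pos_of_pos hY _
        have hs : X / 2 = (X / 2) ^ (2 / p) * (X / 2) ^ (1 / q) := by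
          rw [← Real.rpow_add hY, ha, add_sub_cancel, Real.rpow_one]
        have hlt : (X / 2) ^ (2 / p) ≤ ε ^ (2 : ℝ) := by
          refine le_of_mul_le_mul_right ?_ hYa
          rw [← hs]; exact hc.le
        have h3 := Real.rpow_le_rpow (by positivity) hlt (show 0 ≤ p / 2 by positivity)
        rw [← Real.rpow_mul hY.le, ← Real.rpow_mul hε,
          show 2 / p * (p / 2) = 1 by field_simp, show 2 * (p / 2) = p by ring,
          Real.rpow_one] at h3
        linarith
      have h5 : 0 ≤ ε ^ (2 : ℝ) * K ^ (1 / q) := by positivity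
      have h6 : ε ^ p ≤ ε ^ p * K ^ (1 / q) := le_mul_of_one_le_right hEp hKa
      nlinarith
  refine key.trans ?_
  gcongr
end

section
/- Let (Ω, μ) be a measure space, let ρ : Ω → ℝ be a nonnegative measurable function, let 0 < s < t be real numbers, let k > 0 be a real number, and let h : Ω → ℝ be integrable on the set {x ∈ Ω : ρ(x) < t}. Then ∫_s^t r^{−k−1} (∫_{{ρ < r}} h dμ) dr = (1/k) ∫_{{ρ < t}} h(x)·( (max{ρ(x), s})^{−k} − t^{−k} ) dμ(x). -/
open MeasureTheory Set

/-- integration-by-parts/Fubini identity of Remark 2.2.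
For a measure space `(Ω, μ)`, a nonnegative measurable `ρ`, `0 < s < t`, `k > 0` and
`h` integrable on `{ρ < t}`:
`∫_s^t r^{−k−1} (∫_{{ρ<r}} h dμ) dr = (1/k) ∫_{{ρ<t}} h(x) ((max{ρ(x),s})^{−k} − t^{−k}) dμ`. -/
theorem stmt4 {Ω : Type*} [MeasurableSpace Ω] (μ : Measure Ω)
    (ρ : Ω → ℝ) (hρmeas : Measurable ρ) (hρnonneg : ∀ x, 0 ≤ ρ x)
    (s t k : ℝ) (hs : 0 < s) (hst : s < t) (hk : 0 < k)
    (h : Ω → ℝ) (hint : IntegrableOn h {x | ρ x < t} μ) :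
    (∫ r in s..t, r ^ (-k - 1) * ∫ x in {x | ρ x < r}, h x ∂μ) =
      (1 / k) * ∫ x in {x | ρ x < t}, h x * ((max (ρ x) s) ^ (-k) - t ^ (-k)) ∂μ := by
  have hA : MeasurableSet {x | ρ x < t} := measurableSet_lt hρmeas measurable_const
  have hfin : AEFinStronglyMeasurable h (μ.restrict {x | ρ x < t}) :=
    Integrable.aefinStronglyMeasurable hint
  obtain ⟨T, hT, hT0, hσ⟩ := hfin.exists_set_sigmaFinite
  set μ' := μ.restrict {x | ρ x < t} with hμ'
  set ν := μ'.restrict T with hν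
  have hT0' : ∀ᵐ x ∂μ', x ∉ T → h x = 0 := (ae_restrict_iff' hT.compl).1 hT0
  have hhν : Integrable h ν := Integrable.restrict hint
  have key : ∀ g : Ω → ℝ, (∀ x, h x = 0 → g x = 0) → ∫ x, g x ∂μ' = ∫ x, g x ∂ν := by
    intro g hg
    symm
    apply setIntegral_eq_integral_of_ae_compl_eq_zero
    filter_upwards [hT0'] with x hx hxT using hg x (hx hxT)
  let F : ℝ → Ω → ℝ := fun r x =>
    {p : ℝ × Ω | ρ p.2 < p.1}.indicator (fun p => p.1 ^ (-k - 1) * h p.2) (r, x)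
  have hLI : ∀ a : ℝ, 0 < a → a ≤ t → IntervalIntegrable (fun r : ℝ => r ^ (-k - 1)) volume a t := by
    intro a ha hat
    apply intervalIntegral.intervalIntegrable_rpow
    right
    rw [uIcc_of_le hat]
    intro h0
    exact absurd h0.1 (not_le.2 ha)
  have hFint : Integrable (Function.uncurry F) ((volume.restrict (uIoc s t)).prod ν) := by
    have h1 : Integrable (fun r : ℝ => r ^ (-k - 1)) (volume.restrict (uIoc s t)) :=
      (intervalIntegrable_iff.1 (hLI s hs hst.le))
    exact (h1.mul_prod hhν).indicator
      (measurableSet_lt (hρmeas.comp measurable_snd) measurable_fst)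
  have hL : (∫ r in s..t, r ^ (-k - 1) * ∫ x in {x | ρ x < r}, h x ∂μ)
      = ∫ r in s..t, ∫ x, F r x ∂ν := by
    apply intervalIntegral.integral_congr
    intro r hr
    rw [uIcc_of_le hst.le] at hr
    have hB : MeasurableSet {x | ρ x < r} := measurableSet_lt hρmeas measurable_const
    have e1 : μ.restrict {x | ρ x < r} = μ'.restrict {x | ρ x < r} := by
      rw [hμ', Measure.restrict_restrict hB]
      congr 1
      ext x
      simp only [mem_inter_iff, mem_setOf_eq]
      exact ⟨fun hx => ⟨hx, hx.trans_le hr.2⟩, fun hx => hx.1⟩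
    change r ^ (-k - 1) * ∫ x in {x | ρ x < r}, h x ∂μ = ∫ x, F r x ∂ν
    rw [e1, ← integral_const_mul, ← integral_indicator hB, key]
    · rfl
    · intro x hx
      simp [indicator, hx]
  rw [hL, intervalIntegral_integral_swap hFint, ← integral_const_mul,
    key _ (by intro x hx; simp [hx])]
  have hρν : ∀ᵐ x ∂ν, ρ x < t := ae_restrict_of_ae (ae_restrict_mem hA)
  apply integral_congr_ae
  filter_upwards [hρν] with x hx
  have hm0 : 0 < max (ρ x) s := lt_max_of_lt_right hs
  have hmt : max (ρ x) s ≤ t := max_le hx.le hst.le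
  have e2 : (∫ r in s..t, F r x) = ∫ r in (max (ρ x) s)..t, r ^ (-k - 1) * h x := by
    rw [intervalIntegral.integral_of_le hst.le, intervalIntegral.integral_of_le hmt]
    have : (fun r => F r x) = (Ioi (ρ x)).indicator (fun r => r ^ (-k - 1) * h x) := by
      ext r
      simp [F, indicator]
    rw [this, setIntegral_indicator measurableSet_Ioi]
    congr 2
    ext r
    simp only [mem_inter_iff, mem_Ioc, mem_Ioi, max_lt_iff]
    tauto
  rw [e2, intervalIntegral.integral_mul_const, integral_rpow]
  · have : -k - 1 + 1 = -k := by ring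
    rw [this]
    field_simp
    ring
  · right
    refine ⟨by linarith, ?_⟩
    rw [uIcc_of_le hmt]
    intro h0
    exact absurd h0.1 (not_le.2 hm0)
end

section
/- For α ∈ (0, 1/2) and ε ∈ (0, 1) define u_ε : ℝ² → ℝ by u_ε(x, y) = x·y·(log(x² + y² + ε))^α / (log ε)^α, and let D denote the closed disk {(x,y) : x² + y² ≤ 1/4} in ℝ². Then: (i) for every ε ∈ (0,1), the gradient of u_ε vanishes at the origin and the mixed second partial derivative satisfies ∂²u_ε/∂x∂y (0,0) = 1; (ii) sup_{(x,y) ∈ D} ‖∇u_ε(x,y)‖ → 0 as ε → 0⁺; (iii) ∫_D ( (∂²u_ε/∂x²)² + 2(∂²u_ε/∂x∂y)² + (∂²u_ε/∂y²)² ) → 0 as ε → 0⁺. -/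
open Set Filter MeasureTheory

/-- The function `u_ε(x,y) = x y (log(x²+y²+ε))^α / (log ε)^α` of Remark 2.5, interpreted
(as both logarithms are negative on the relevant range) as
`x y (log(x²+y²+ε)/log ε)^α` with a real power of the positive ratio. -/
noncomputable def uFun (α ε : ℝ) (p : ℝ × ℝ) : ℝ :=
  p.1 * p.2 * (Real.log (p.1 ^ 2 + p.2 ^ 2 + ε) / Real.log ε) ^ α

/-- The closed disk of radius `1/2` centered at the origin in `ℝ²`. -/
def diskD : Set (ℝ × ℝ) := {p | p.1 ^ 2 + p.2 ^ 2 ≤ 1 / 4}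

/-- Second partial derivative `∂²u/∂x²`. -/
noncomputable def uxx (α ε : ℝ) (p : ℝ × ℝ) : ℝ :=
  deriv (fun x => deriv (fun x' => uFun α ε (x', p.2)) x) p.1

/-- Mixed second partial derivative `∂²u/∂x∂y`. -/
noncomputable def uxy (α ε : ℝ) (p : ℝ × ℝ) : ℝ :=
  deriv (fun x => deriv (fun y => uFun α ε (x, y)) p.2) p.1

/-- Second partial derivative `∂²u/∂y²`. -/
noncomputable def uyy (α ε : ℝ) (p : ℝ × ℝ) : ℝ :=
  deriv (fun y => deriv (fun y' => uFun α ε (p.1, y')) y) p.2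


/-- The profile `(log s / log ε)^α` and its derivatives. -/
noncomputable def hF (α ε s : ℝ) : ℝ := (Real.log s / Real.log ε) ^ α

noncomputable def hE (α ε : ℝ) : ℝ := (-Real.log ε) ^ (-α)

noncomputable def hF1 (α ε s : ℝ) : ℝ := hE α ε * (-(α * (-Real.log s) ^ (α - 1)) / s)

noncomputable def hF2 (α ε s : ℝ) : ℝ :=
  hE α ε * ((α * (α - 1) * (-Real.log s) ^ (α - 2) + α * (-Real.log s) ^ (α - 1)) / s ^ 2)

lemma hF_eq {α ε s : ℝ} (h0 : 0 < ε) (h1 : ε < 1) (hs0 : 0 < s) (hs1 : s < 1) :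
    hF α ε s = hE α ε * (-Real.log s) ^ α := by
  have hL : Real.log ε < 0 := Real.log_neg h0 h1
  have hl : Real.log s < 0 := Real.log_neg hs0 hs1
  unfold hF hE
  rw [← neg_div_neg_eq, Real.div_rpow (by linarith) (by linarith), Real.rpow_neg (by linarith)]
  rw [div_eq_mul_inv, mul_comm]

lemma hF_deriv {α ε s : ℝ} (h0 : 0 < ε) (h1 : ε < 1) (hs0 : 0 < s) (hs1 : s < 1) :
    HasDerivAt (hF α ε) (hF1 α ε s) s := by
  have hl : Real.log s < 0 := Real.log_neg hs0 hs1
  have h : HasDerivAt (fun s => hE α ε * (-Real.log s) ^ α) (hF1 α ε s) s := by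
    have := ((Real.hasDerivAt_log hs0.ne').neg.rpow_const (p := α)
      (Or.inl (by simp only [Pi.neg_apply]; linarith))).const_mul (hE α ε)
    refine HasDerivAt.congr_deriv this ?_
    simp only [hF1, Pi.neg_apply]
    ring
  refine h.congr_of_eventuallyEq ?_
  filter_upwards [Ioo_mem_nhds hs0 hs1] with t ht
  exact hF_eq h0 h1 ht.1 ht.2

lemma hF1_deriv {α ε s : ℝ} (hs0 : 0 < s) (hs1 : s < 1) :
    HasDerivAt (hF1 α ε) (hF2 α ε s) s := by
  have hl : Real.log s < 0 := Real.log_neg hs0 hs1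
  have h1 := ((Real.hasDerivAt_log hs0.ne').neg.rpow_const (p := α - 1)
      (Or.inl (by simp only [Pi.neg_apply]; linarith)))
  have h2 := (((h1.const_mul α).neg).div (hasDerivAt_id s) hs0.ne').const_mul (hE α ε)
  refine HasDerivAt.congr_deriv h2 ?_
  simp only [hF2, Pi.neg_apply, id]
  rw [show α - 1 - 1 = α - 2 by ring]
  field_simp
  ring

lemma uFun_hF (α ε : ℝ) (p : ℝ × ℝ) :
    uFun α ε p = p.1 * p.2 * hF α ε (p.1 ^ 2 + p.2 ^ 2 + ε) := rfl

lemma u_dx {α ε x y : ℝ} (h0 : 0 < ε) (h1 : ε < 1) (h : x ^ 2 + y ^ 2 + ε < 1) :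
    HasDerivAt (fun x' => uFun α ε (x', y))
      (y * hF α ε (x ^ 2 + y ^ 2 + ε) + 2 * x ^ 2 * y * hF1 α ε (x ^ 2 + y ^ 2 + ε)) x := by
  have hs : HasDerivAt (fun x' : ℝ => x' ^ 2 + y ^ 2 + ε) (2 * x) x := by
    simpa using ((hasDerivAt_pow 2 x).add_const (y ^ 2)).add_const ε
  have hc := (hF_deriv (α := α) h0 h1 (by positivity) h).comp x hs
  have := ((hasDerivAt_id x).mul_const y).mul hc
  refine HasDerivAt.congr_deriv this ?_
  simp only [Function.comp, id]
  ring

lemma u_dy {α ε x y : ℝ} (h0 : 0 < ε) (h1 : ε < 1) (h : x ^ 2 + y ^ 2 + ε < 1) :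
    HasDerivAt (fun y' => uFun α ε (x, y'))
      (x * hF α ε (x ^ 2 + y ^ 2 + ε) + 2 * y ^ 2 * x * hF1 α ε (x ^ 2 + y ^ 2 + ε)) y := by
  have h' : y ^ 2 + x ^ 2 + ε < 1 := by linarith
  have := u_dx (α := α) h0 h1 h'
  rw [add_comm (y ^ 2)] at this
  convert this using 1
  funext t
  simp only [uFun]
  rw [mul_comm x t, add_comm (x ^ 2)]

lemma ev_x {ε x y : ℝ} (h : x ^ 2 + y ^ 2 + ε < 1) :
    ∀ᶠ t in nhds x, t ^ 2 + y ^ 2 + ε < 1 := by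
  have : Continuous (fun t : ℝ => t ^ 2 + y ^ 2 + ε) := by fun_prop
  exact this.continuousAt.eventually (gt_mem_nhds h)

lemma uxx_eq {α ε x y : ℝ} (h0 : 0 < ε) (h1 : ε < 1) (h : x ^ 2 + y ^ 2 + ε < 1) :
    uxx α ε (x, y) = 6 * x * y * hF1 α ε (x ^ 2 + y ^ 2 + ε)
      + 4 * x ^ 3 * y * hF2 α ε (x ^ 2 + y ^ 2 + ε) := by
  unfold uxx
  have hs : HasDerivAt (fun x' : ℝ => x' ^ 2 + y ^ 2 + ε) (2 * x) x := by
    simpa using ((hasDerivAt_pow 2 x).add_const (y ^ 2)).add_const ε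
  have hc := (hF_deriv (α := α) h0 h1 (by positivity) h).comp x hs
  have hc1 := (hF1_deriv (α := α) (ε := ε) (by positivity) h).comp x hs
  have hm := (hc.const_mul y).add ((((hasDerivAt_pow 2 x).const_mul 2).mul_const y).mul hc1)
  have hev : (fun x => deriv (fun x' => uFun α ε (x', y)) x) =ᶠ[nhds x]
      fun x => y * hF α ε (x ^ 2 + y ^ 2 + ε) + 2 * x ^ 2 * y * hF1 α ε (x ^ 2 + y ^ 2 + ε) := by
    filter_upwards [ev_x h] with t ht
    exact (u_dx h0 h1 ht).deriv
  change deriv (fun x => deriv (fun x' => uFun α ε (x', y)) x) x = _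
  rw [hev.deriv_eq]
  refine (HasDerivAt.deriv hm).trans ?_
  simp only [Function.comp]
  push_cast
  ring

lemma uyy_eq {α ε x y : ℝ} (h0 : 0 < ε) (h1 : ε < 1) (h : x ^ 2 + y ^ 2 + ε < 1) :
    uyy α ε (x, y) = 6 * x * y * hF1 α ε (x ^ 2 + y ^ 2 + ε)
      + 4 * y ^ 3 * x * hF2 α ε (x ^ 2 + y ^ 2 + ε) := by
  have h' : y ^ 2 + x ^ 2 + ε < 1 := by linarith
  have e : uyy α ε (x, y) = uxx α ε (y, x) := by
    unfold uyy uxx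
    have : (fun t => uFun α ε (x, t)) = (fun t => uFun α ε (t, x)) := by
      funext t
      simp only [uFun]
      rw [mul_comm x t, add_comm (x ^ 2)]
    simp only [this]
  rw [e, uxx_eq h0 h1 h', add_comm (y ^ 2)]
  ring

lemma uxy_eq {α ε x y : ℝ} (h0 : 0 < ε) (h1 : ε < 1) (h : x ^ 2 + y ^ 2 + ε < 1) :
    uxy α ε (x, y) = hF α ε (x ^ 2 + y ^ 2 + ε)
      + 2 * (x ^ 2 + y ^ 2) * hF1 α ε (x ^ 2 + y ^ 2 + ε)
      + 4 * x ^ 2 * y ^ 2 * hF2 α ε (x ^ 2 + y ^ 2 + ε) := by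
  unfold uxy
  have hs : HasDerivAt (fun x' : ℝ => x' ^ 2 + y ^ 2 + ε) (2 * x) x := by
    simpa using ((hasDerivAt_pow 2 x).add_const (y ^ 2)).add_const ε
  have hc := (hF_deriv (α := α) h0 h1 (by positivity) h).comp x hs
  have hc1 := (hF1_deriv (α := α) (ε := ε) (by positivity) h).comp x hs
  have hm := ((hasDerivAt_id x).mul hc).add (((hasDerivAt_id x).const_mul (2 * y ^ 2)).mul hc1)
  have hev : (fun x => deriv (fun y' => uFun α ε (x, y')) y) =ᶠ[nhds x]
      fun x => x * hF α ε (x ^ 2 + y ^ 2 + ε) + 2 * y ^ 2 * x * hF1 α ε (x ^ 2 + y ^ 2 + ε) := by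
    filter_upwards [ev_x h] with t ht
    exact (u_dy h0 h1 ht).deriv
  change deriv (fun x => deriv (fun y' => uFun α ε (x, y')) y) x = _
  rw [hev.deriv_eq]
  refine (HasDerivAt.deriv hm).trans ?_
  simp only [Function.comp, id]
  ring

lemma u_fderiv {α ε x y : ℝ} (h0 : 0 < ε) (h1 : ε < 1) (h : x ^ 2 + y ^ 2 + ε < 1) :
    fderiv ℝ (uFun α ε) (x, y) =
      (y * hF α ε (x ^ 2 + y ^ 2 + ε) + 2 * x ^ 2 * y * hF1 α ε (x ^ 2 + y ^ 2 + ε)) •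
        ContinuousLinearMap.fst ℝ ℝ ℝ +
      (x * hF α ε (x ^ 2 + y ^ 2 + ε) + 2 * y ^ 2 * x * hF1 α ε (x ^ 2 + y ^ 2 + ε)) •
        ContinuousLinearMap.snd ℝ ℝ ℝ := by
  have hx : HasFDerivAt (fun p : ℝ × ℝ => p.1) (ContinuousLinearMap.fst ℝ ℝ ℝ) (x, y) :=
    hasFDerivAt_fst
  have hy : HasFDerivAt (fun p : ℝ × ℝ => p.2) (ContinuousLinearMap.snd ℝ ℝ ℝ) (x, y) :=
    hasFDerivAt_snd
  have hs := ((hx.pow 2).add (hy.pow 2)).add_const ε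
  have hc := (hF_deriv (α := α) (s := x ^ 2 + y ^ 2 + ε) h0 h1
    (by positivity) h).comp_hasFDerivAt (x, y) hs
  have := (hx.mul hy).mul hc
  refine (HasFDerivAt.fderiv this).trans ?_
  ext <;> simp <;> ring

lemma hE_nonneg {α ε : ℝ} (h0 : 0 < ε) (h1 : ε < 1) : 0 ≤ hE α ε :=
  Real.rpow_nonneg (by linarith [Real.log_neg h0 h1]) _

lemma ell_half {s : ℝ} (hs0 : 0 < s) (hs : s ≤ 1 / 2) : 1 / 2 ≤ -Real.log s := by
  have := Real.log_le_sub_one_of_pos hs0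
  linarith

lemma rpow_bd {l b : ℝ} (hl : 1 / 2 ≤ l) (hb : b ≤ 0) (n : ℕ) (hn : -(n : ℝ) ≤ b) :
    l ^ b ≤ 2 ^ n := by
  calc l ^ b ≤ (1 / 2 : ℝ) ^ b := Real.rpow_le_rpow_of_nonpos (by norm_num) hl hb
    _ ≤ (1 / 2 : ℝ) ^ (-(n : ℝ)) :=
      Real.rpow_le_rpow_of_exponent_ge (by norm_num) (by norm_num) hn
    _ = 2 ^ n := by
      rw [Real.rpow_neg (by norm_num), Real.rpow_natCast]; simp

lemma rpow_le_one_add {l b : ℝ} (hl : 0 ≤ l) (hb0 : 0 ≤ b) (hb : b ≤ 1) : l ^ b ≤ 1 + l := by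
  rcases le_total l 1 with h | h
  · linarith [Real.rpow_le_one hl h hb0]
  · have := Real.rpow_le_rpow_of_exponent_le h hb
    rw [Real.rpow_one] at this
    linarith

lemma hF1_bd {α ε s : ℝ} (ha0 : 0 < α) (ha : α < 1 / 2) (h0 : 0 < ε) (h1 : ε < 1)
    (hs0 : 0 < s) (hs : s ≤ 1 / 2) : s * |hF1 α ε s| ≤ hE α ε := by
  have hl := ell_half hs0 hs
  have hE0 : 0 ≤ hE α ε := hE_nonneg h0 h1
  have hb := rpow_bd hl (b := α - 1) (by linarith) 1 (by push_cast; linarith)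
  have hn : 0 ≤ (-Real.log s) ^ (α - 1) := Real.rpow_nonneg (by linarith) _
  have e : s * |hF1 α ε s| = hE α ε * (α * (-Real.log s) ^ (α - 1)) := by
    unfold hF1
    rw [abs_mul, abs_div, abs_neg, abs_of_pos hs0, abs_of_nonneg hE0,
      abs_of_nonneg (mul_nonneg ha0.le hn)]
    field_simp
  rw [e]
  have : α * (-Real.log s) ^ (α - 1) ≤ 1 := by nlinarith
  nlinarith

lemma hF2_bd {α ε s : ℝ} (ha0 : 0 < α) (ha : α < 1 / 2) (h0 : 0 < ε) (h1 : ε < 1)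
    (hs0 : 0 < s) (hs : s ≤ 1 / 2) : s ^ 2 * |hF2 α ε s| ≤ 3 * hE α ε := by
  have hl := ell_half hs0 hs
  have hE0 : 0 ≤ hE α ε := hE_nonneg h0 h1
  have hb := rpow_bd hl (b := α - 1) (by linarith) 1 (by push_cast; linarith)
  have hn : 0 ≤ (-Real.log s) ^ (α - 1) := Real.rpow_nonneg (by linarith) _
  have hb2 := rpow_bd hl (b := α - 2) (by linarith) 2 (by push_cast; linarith)
  have hn2 : 0 ≤ (-Real.log s) ^ (α - 2) := Real.rpow_nonneg (by linarith) _
  have e : s ^ 2 * |hF2 α ε s| = hE α ε *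
      |α * (α - 1) * (-Real.log s) ^ (α - 2) + α * (-Real.log s) ^ (α - 1)| := by
    unfold hF2
    rw [abs_mul, abs_div, abs_of_pos (pow_pos hs0 2), abs_of_nonneg hE0]
    field_simp
  rw [e, mul_comm]
  refine mul_le_mul_of_nonneg_right ?_ hE0
  have i1 : α * (-Real.log s) ^ (α - 1) ≤ 1 := by nlinarith
  have i1' : 0 ≤ α * (-Real.log s) ^ (α - 1) := by positivity
  have i2 : α * (1 - α) * (-Real.log s) ^ (α - 2) ≤ 2 := by
    have q : α * (1 - α) ≤ 1 / 2 := by nlinarith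
    have q0 : 0 ≤ α * (1 - α) := by nlinarith
    nlinarith
  have i2' : 0 ≤ α * (1 - α) * (-Real.log s) ^ (α - 2) :=
    mul_nonneg (by nlinarith) hn2
  rw [abs_le]
  constructor <;> nlinarith

lemma hF_bd {α ε s : ℝ} (ha0 : 0 < α) (ha : α < 1 / 2) (h0 : 0 < ε) (h1 : ε < 1)
    (hs0 : 0 < s) (hs : s ≤ 1 / 2) : |hF α ε s| ≤ hE α ε * (1 + -Real.log s) := by
  have hl := ell_half hs0 hs
  have hE0 : 0 ≤ hE α ε := hE_nonneg h0 h1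
  rw [hF_eq h0 h1 hs0 (by linarith), abs_of_nonneg
    (mul_nonneg hE0 (Real.rpow_nonneg (by linarith) _))]
  exact mul_le_mul_of_nonneg_left (rpow_le_one_add (by linarith) ha0.le (by linarith)) hE0

lemma hF_sq_bd {α ε s : ℝ} (ha0 : 0 < α) (ha : α < 1 / 2) (h0 : 0 < ε) (h1 : ε < 1)
    (hs0 : 0 < s) (hs : s ≤ 1 / 2) : hF α ε s ^ 2 ≤ hE α ε ^ 2 * (1 + -Real.log s) := by
  have hl := ell_half hs0 hs
  rw [hF_eq h0 h1 hs0 (by linarith), mul_pow]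
  refine mul_le_mul_of_nonneg_left ?_ (sq_nonneg _)
  rw [← Real.rpow_natCast, ← Real.rpow_mul (by linarith)]
  exact rpow_le_one_add (by linarith) (by positivity) (by push_cast; linarith)

lemma sqrt_log_bd {s z : ℝ} (hs0 : 0 < s) (hs : s ≤ 1 / 2) (hz : z ^ 2 ≤ s) :
    |z| * (1 + -Real.log s) ≤ 3 := by
  have hl := ell_half hs0 hs
  have hq : 0 < √s := Real.sqrt_pos.2 hs0
  have hz' : |z| ≤ √s := Real.abs_le_sqrt hz
  have h1 : √s ≤ 1 := by
    rw [Real.sqrt_le_one]; linarith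
  have h2 := Real.one_sub_inv_le_log_of_pos hq
  rw [Real.log_sqrt hs0.le] at h2
  have h3 : √s * (1 + -Real.log s) ≤ √s * (1 + 2 * ((√s)⁻¹ - 1)) := by
    refine mul_le_mul_of_nonneg_left ?_ hq.le
    linarith
  have h4 : √s * (1 + 2 * ((√s)⁻¹ - 1)) = 2 - √s := by
    field_simp
    ring
  have h5 : |z| * (1 + -Real.log s) ≤ √s * (1 + -Real.log s) :=
    mul_le_mul_of_nonneg_right hz' (by linarith)
  linarith

lemma hE_tendsto {α : ℝ} (ha0 : 0 < α) :
    Tendsto (hE α) (nhdsWithin 0 (Ioi 0)) (nhds 0) := by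
  have h1 : Tendsto (fun ε => -Real.log ε) (nhdsWithin 0 (Ioi 0)) atTop :=
    tendsto_neg_atBot_atTop.comp Real.tendsto_log_nhdsGT_zero
  exact (tendsto_rpow_neg_atTop ha0).comp h1

lemma grad_comp_bd {α ε x y s : ℝ} (ha0 : 0 < α) (ha : α < 1 / 2) (h0 : 0 < ε) (h1 : ε < 1)
    (hs0 : 0 < s) (hs : s ≤ 1 / 2) (hx : x ^ 2 ≤ s) (hy : y ^ 2 ≤ s) :
    |y * hF α ε s + 2 * x ^ 2 * y * hF1 α ε s| ≤ 5 * hE α ε := by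
  have hE0 : 0 ≤ hE α ε := hE_nonneg h0 h1
  have a1 := hF_bd ha0 ha h0 h1 hs0 hs
  have a2 := hF1_bd ha0 ha h0 h1 hs0 hs
  have a3 := sqrt_log_bd hs0 hs hy
  have hy1 : |y| ≤ 1 := by
    rw [← sq_le_one_iff_abs_le_one]; linarith
  calc |y * hF α ε s + 2 * x ^ 2 * y * hF1 α ε s|
      ≤ |y * hF α ε s| + |2 * x ^ 2 * y * hF1 α ε s| := abs_add_le _ _
    _ = |y| * |hF α ε s| + 2 * |y| * (x ^ 2 * |hF1 α ε s|) := by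
      simp only [abs_mul, abs_pow, sq_abs, abs_two]; ring
    _ ≤ |y| * (hE α ε * (1 + -Real.log s)) + 2 * 1 * (s * |hF1 α ε s|) := by gcongr
    _ = hE α ε * (|y| * (1 + -Real.log s)) + 2 * (s * |hF1 α ε s|) := by ring
    _ ≤ hE α ε * 3 + 2 * hE α ε := by gcongr
    _ = 5 * hE α ε := by ring

lemma fderiv_bd {α ε : ℝ} (ha0 : 0 < α) (ha : α < 1 / 2) (h0 : 0 < ε) (h1 : ε < 1 / 4)
    {p : ℝ × ℝ} (hp : p ∈ diskD) : ‖fderiv ℝ (uFun α ε) p‖ ≤ 10 * hE α ε := by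
  obtain ⟨x, y⟩ := p
  have hp' : x ^ 2 + y ^ 2 ≤ 1 / 4 := hp
  have hs0 : 0 < x ^ 2 + y ^ 2 + ε := by positivity
  have hs : x ^ 2 + y ^ 2 + ε ≤ 1 / 2 := by linarith
  rw [u_fderiv h0 (by linarith) (by linarith)]
  have b1 := grad_comp_bd (x := x) (y := y) ha0 ha h0 (by linarith) hs0 hs
    (by nlinarith) (by nlinarith)
  have b2 := grad_comp_bd (x := y) (y := x) ha0 ha h0 (by linarith) hs0 hs
    (by nlinarith) (by nlinarith)
  refine (norm_add_le _ _).trans ?_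
  rw [norm_smul, norm_smul, Real.norm_eq_abs, Real.norm_eq_abs]
  have n1 := ContinuousLinearMap.norm_fst_le ℝ ℝ ℝ
  have n2 := ContinuousLinearMap.norm_snd_le ℝ ℝ ℝ
  have c1 := mul_le_mul b1 n1 (norm_nonneg _) ((abs_nonneg _).trans b1)
  have c2 := mul_le_mul b2 n2 (norm_nonneg _) ((abs_nonneg _).trans b2)
  linarith

lemma pure_bd {α ε x y s : ℝ} (ha0 : 0 < α) (ha : α < 1 / 2) (h0 : 0 < ε) (h1 : ε < 1)
    (hs0 : 0 < s) (hs : s ≤ 1 / 2) (hx : x ^ 2 ≤ s) (hy : y ^ 2 ≤ s) :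
    (6 * x * y * hF1 α ε s + 4 * x ^ 3 * y * hF2 α ε s) ^ 2 ≤ 324 * hE α ε ^ 2 := by
  have hE0 : 0 ≤ hE α ε := hE_nonneg h0 h1
  have a2 := hF1_bd ha0 ha h0 h1 hs0 hs
  have a3 := hF2_bd ha0 ha h0 h1 hs0 hs
  have hxy : |x| * |y| ≤ s := by
    nlinarith [sq_nonneg (|x| - |y|), sq_abs x, sq_abs y]
  have : |6 * x * y * hF1 α ε s + 4 * x ^ 3 * y * hF2 α ε s| ≤ 18 * hE α ε := by
    calc _ ≤ |6 * x * y * hF1 α ε s| + |4 * x ^ 3 * y * hF2 α ε s| := abs_add_le _ _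
      _ = 6 * ((|x| * |y|) * |hF1 α ε s|) + 4 * ((x ^ 2 * (|x| * |y|)) * |hF2 α ε s|) := by
        have e2 : x ^ 2 = |x| ^ 2 := (sq_abs x).symm
        rw [e2]
        simp only [abs_mul, abs_pow]
        norm_num only [abs_of_nonneg]
        ring_nf
      _ ≤ 6 * (s * |hF1 α ε s|) + 4 * ((s * s) * |hF2 α ε s|) := by gcongr
      _ = 6 * (s * |hF1 α ε s|) + 4 * (s ^ 2 * |hF2 α ε s|) := by ring
      _ ≤ 6 * hE α ε + 4 * (3 * hE α ε) := by gcongr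
      _ = _ := by ring
  calc _ ≤ (18 * hE α ε) ^ 2 := sq_le_sq' (abs_le.1 this).1 (abs_le.1 this).2
    _ = _ := by ring

lemma mixed_bd {α ε x y s : ℝ} (ha0 : 0 < α) (ha : α < 1 / 2) (h0 : 0 < ε) (h1 : ε < 1)
    (hs0 : 0 < s) (hs : s ≤ 1 / 2) (hxy : x ^ 2 + y ^ 2 ≤ s) :
    (hF α ε s + 2 * (x ^ 2 + y ^ 2) * hF1 α ε s + 4 * x ^ 2 * y ^ 2 * hF2 α ε s) ^ 2
      ≤ hE α ε ^ 2 * (394 + -2 * Real.log s) := by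
  have hE0 : 0 ≤ hE α ε := hE_nonneg h0 h1
  have a1 := hF_sq_bd ha0 ha h0 h1 hs0 hs
  have a2 := hF1_bd ha0 ha h0 h1 hs0 hs
  have a3 := hF2_bd ha0 ha h0 h1 hs0 hs
  have hx : x ^ 2 ≤ s := by nlinarith
  have hy : y ^ 2 ≤ s := by nlinarith
  have : |2 * (x ^ 2 + y ^ 2) * hF1 α ε s + 4 * x ^ 2 * y ^ 2 * hF2 α ε s| ≤ 14 * hE α ε := by
    calc _ ≤ |2 * (x ^ 2 + y ^ 2) * hF1 α ε s| + |4 * x ^ 2 * y ^ 2 * hF2 α ε s| :=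
          abs_add_le _ _
      _ = 2 * ((x ^ 2 + y ^ 2) * |hF1 α ε s|) + 4 * ((x ^ 2 * y ^ 2) * |hF2 α ε s|) := by
        rw [abs_mul (2 * (x ^ 2 + y ^ 2)), abs_mul (4 * x ^ 2 * y ^ 2),
          abs_of_nonneg (by positivity : 0 ≤ 2 * (x ^ 2 + y ^ 2)),
          abs_of_nonneg (by positivity : 0 ≤ 4 * x ^ 2 * y ^ 2)]
        ring
      _ ≤ 2 * (s * |hF1 α ε s|) + 4 * ((s * s) * |hF2 α ε s|) := by gcongr
      _ = 2 * (s * |hF1 α ε s|) + 4 * (s ^ 2 * |hF2 α ε s|) := by ring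
      _ ≤ 2 * hE α ε + 4 * (3 * hE α ε) := by gcongr
      _ = _ := by ring
  have h2 := sq_le_sq' (abs_le.1 this).1 (abs_le.1 this).2
  have h3 := add_sq_le (a := hF α ε s)
    (b := 2 * (x ^ 2 + y ^ 2) * hF1 α ε s + 4 * x ^ 2 * y ^ 2 * hF2 α ε s)
  rw [← add_assoc] at h3
  nlinarith

lemma hess_bd {α ε : ℝ} (ha0 : 0 < α) (ha : α < 1 / 2) (h0 : 0 < ε) (h1 : ε < 1 / 4)
    {p : ℝ × ℝ} (hp : p ∈ diskD) (hp1 : p.1 ≠ 0) :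
    ‖(uxx α ε p) ^ 2 + 2 * (uxy α ε p) ^ 2 + (uyy α ε p) ^ 2‖
      ≤ hE α ε ^ 2 * (1436 - 8 * Real.log p.1) := by
  obtain ⟨x, y⟩ := p
  have hp' : x ^ 2 + y ^ 2 ≤ 1 / 4 := hp
  have hs0 : 0 < x ^ 2 + y ^ 2 + ε := by positivity
  have hs : x ^ 2 + y ^ 2 + ε ≤ 1 / 2 := by linarith
  have hx0 : x ≠ 0 := hp1
  rw [Real.norm_of_nonneg (by positivity)]
  rw [uxx_eq h0 (by linarith) (by linarith), uxy_eq h0 (by linarith) (by linarith),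
    uyy_eq h0 (by linarith) (by linarith)]
  have b1 := pure_bd (x := x) (y := y) ha0 ha h0 (by linarith) hs0 hs
    (by nlinarith) (by nlinarith)
  have b2 := pure_bd (x := y) (y := x) ha0 ha h0 (by linarith) hs0 hs
    (by nlinarith) (by nlinarith)
  have b3 := mixed_bd (x := x) (y := y) ha0 ha h0 (by linarith) hs0 hs (by linarith)
  have hlog : 2 * Real.log x ≤ Real.log (x ^ 2 + y ^ 2 + ε) := by
    have := Real.log_le_log (x := x ^ 2) (by positivity)
      (by nlinarith : x ^ 2 ≤ x ^ 2 + y ^ 2 + ε)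
    rw [Real.log_pow] at this
    exact_mod_cast this
  rw [show 6 * y * x = 6 * x * y by ring] at b2
  have h4 := mul_le_mul_of_nonneg_left hlog (sq_nonneg (hE α ε))
  change _ ≤ hE α ε ^ 2 * (1436 - 8 * Real.log x)
  nlinarith

lemma diskD_meas : MeasurableSet diskD := by
  have : IsClosed diskD := isClosed_le (by fun_prop) (by fun_prop)
  exact this.measurableSet

lemma log_int : IntegrableOn (fun p : ℝ × ℝ => 1436 - 8 * Real.log p.1) diskD := by
  have hsub : diskD ⊆ Ioc (-1 : ℝ) 1 ×ˢ Ioc (-1 : ℝ) 1 := by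
    rintro ⟨x, y⟩ hp
    have hp' : x ^ 2 + y ^ 2 ≤ 1 / 4 := hp
    refine ⟨⟨?_, ?_⟩, ⟨?_, ?_⟩⟩ <;> simp only <;> nlinarith
  refine IntegrableOn.mono_set ?_ hsub
  have h1 : IntegrableOn (fun x : ℝ => 1436 - 8 * Real.log x) (Ioc (-1) 1) := by
    have h := (intervalIntegral.intervalIntegrable_log' (a := -1) (b := 1)).const_mul 8
    have h2 := (intervalIntegrable_const (a := -1) (b := 1) (c := (1436 : ℝ))
      (μ := volume)).sub h
    rw [intervalIntegrable_iff_integrableOn_Ioc_of_le (by norm_num)] at h2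
    exact h2
  unfold IntegrableOn
  rw [Measure.volume_eq_prod, ← Measure.prod_restrict]
  exact Integrable.comp_fst (f := fun x : ℝ => 1436 - 8 * Real.log x) h1 _

lemma ae_fst_ne : ∀ᵐ p : ℝ × ℝ, p.1 ≠ 0 := by
  have h : ∀ᵐ x : ℝ, x ≠ 0 := by simp [ae_iff]
  rw [Measure.volume_eq_prod]
  exact Measure.quasiMeasurePreserving_fst.ae h

/-- Remark 2.5: optimality of the hypotheses.
(i) For every `ε ∈ (0,1)` the gradient of `u_ε` vanishes at the origin and
`∂²u_ε/∂x∂y(0,0) = 1`; (ii) `sup_D ‖∇u_ε‖ → 0` as `ε → 0⁺`;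
(iii) `∫_D ((u_ε)_{xx}² + 2 (u_ε)_{xy}² + (u_ε)_{yy}²) → 0` as `ε → 0⁺`. -/
theorem stmt6 (α : ℝ) (hα : α ∈ Ioo (0 : ℝ) (1 / 2)) :
    (∀ ε ∈ Ioo (0 : ℝ) 1,
        fderiv ℝ (uFun α ε) (0, 0) = 0 ∧
          deriv (fun x => deriv (fun y => uFun α ε (x, y)) 0) 0 = 1) ∧
    Tendsto (fun ε => ⨆ p ∈ diskD, ‖fderiv ℝ (uFun α ε) p‖)
      (nhdsWithin 0 (Ioi 0)) (nhds 0) ∧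
    Tendsto (fun ε => ∫ p in diskD,
        ((uxx α ε p) ^ 2 + 2 * (uxy α ε p) ^ 2 + (uyy α ε p) ^ 2))
      (nhdsWithin 0 (Ioi 0)) (nhds 0) := by
  obtain ⟨ha0, ha⟩ := hα
  have hev : ∀ᶠ ε in nhdsWithin (0 : ℝ) (Ioi 0), ε ∈ Ioo (0 : ℝ) (1 / 4) :=
    Ioo_mem_nhdsGT (by norm_num)
  refine ⟨?_, ?_, ?_⟩
  · rintro ε ⟨h0, h1⟩
    constructor
    · rw [u_fderiv h0 h1 (by simpa using h1)]
      simp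
    · change uxy α ε (0, 0) = 1
      rw [uxy_eq h0 h1 (by simpa using h1)]
      simp [hF, div_self (Real.log_neg h0 h1).ne]
  · have hlim : Tendsto (fun ε => 10 * hE α ε) (nhdsWithin 0 (Ioi 0)) (nhds 0) := by
      simpa using (hE_tendsto ha0).const_mul 10
    refine squeeze_zero' ?_ ?_ hlim
    · exact Eventually.of_forall fun ε =>
        Real.iSup_nonneg fun p => Real.iSup_nonneg fun _ => norm_nonneg _
    · filter_upwards [hev] with ε hε
      have hE0 : 0 ≤ 10 * hE α ε :=
        mul_nonneg (by norm_num) (hE_nonneg hε.1 (by linarith [hε.2]))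
      exact Real.iSup_le (fun p => Real.iSup_le
        (fun hp => fderiv_bd ha0 ha hε.1 hε.2 hp) hE0) hE0
  · have hlim : Tendsto (fun ε => hE α ε ^ 2 * ∫ p in diskD, (1436 - 8 * Real.log p.1))
        (nhdsWithin 0 (Ioi 0)) (nhds 0) := by
      simpa using ((hE_tendsto ha0).pow 2).mul_const
        (∫ p in diskD, (1436 - 8 * Real.log p.1))
    refine squeeze_zero_norm' ?_ hlim
    filter_upwards [hev] with ε hε
    rw [← integral_const_mul]
    refine norm_integral_le_of_norm_le (log_int.const_mul _) ?_
    filter_upwards [ae_restrict_mem diskD_meas, ae_restrict_of_ae ae_fst_ne] with p hp hp1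
    exact hess_bd ha0 ha hε.1 hε.2 hp hp1
end
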